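/- The curves C : y² = x⁵ and C̃ : y² = x³ in ℂ², as germs at the origin, are not bi-Lipschitz homeomorphic (as germs of metric spaces with the Euclidean outer metric). -/

import Mathlib

open Metric

/-- The curve `y² = x⁵` in `ℂ²`. -/
def curveC : Set (EuclideanSpace ℂ (Fin 2)) := {p | (p 1) ^ 2 = (p 0) ^ 5}

/-- The curve `y² = x³` in `ℂ²`. -/
def curveCt : Set (EuclideanSpace ℂ (Fin 2)) := {p | (p 1) ^ 2 = (p 0) ^ 3}

/-- `(X,0)` and `(Y,0)` are bi-`α`-Hölder homeomorphic as germs. -/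
def BiHolderGerm (X Y : Set (EuclideanSpace ℂ (Fin 2))) (α : ℝ) : Prop :=
  ∃ (U V : Set (EuclideanSpace ℂ (Fin 2))) (F : EuclideanSpace ℂ (Fin 2) → EuclideanSpace ℂ (Fin 2)) (c : ℝ),
    IsOpen U ∧ IsOpen V ∧ (0 : EuclideanSpace ℂ (Fin 2)) ∈ U ∧ (0 : EuclideanSpace ℂ (Fin 2)) ∈ V ∧
    0 < c ∧ F 0 = 0 ∧ Set.BijOn F (X ∩ U) (Y ∩ V) ∧
    ∀ p ∈ X ∩ U, ∀ q ∈ X ∩ U,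
      (1 / c) * ‖p - q‖ ^ (1 / α) ≤ ‖F p - F q‖ ∧ ‖F p - F q‖ ≤ c * ‖p - q‖ ^ α

/-!
The odd cusp `y² = x^(2k+1)` is parametrized by `s ↦ (s², s^(2k+1))`. On `y² = x^(2l+1)` the points
with parameters `t` and `-t` are `2|t|^(2l+1)` apart, yet they cannot be joined inside the curve
within a ball of radius `|t|²`, since `y / x^l` is a continuous square root of `x` off `x = 0`. Let
`F` be a bi-Lipschitz map to `y² = x^(2k+1)` with `k < l`. The two image points have parameters
`s, s'` with `|s|^(2k) |s - s'| ≲ |t|^(2l+1)` and `|s|^(2k) ≳ |t|^(2k)`, so `|s - s'| ≲ |t|³`. The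
segment `[s, s']` then parametrizes a path of length `≲ |t|³ ≪ |t|²` between them, which `F⁻¹`
carries back to a forbidden path.
-/

open Filter Topology
open scoped NNReal

section BiLipschitzGerm

variable {E E' : Type*} [NormedAddCommGroup E] [NormedAddCommGroup E']

/-- `F` is a bi-Lipschitz equivalence of the germs `(X, 0)` and `(Y, 0)` with inverse `G`. One
radius `r` and one constant `K` serve both maps; as `F` need not carry `X ∩ ball 0 r` onto
`Y ∩ ball 0 r`, they are inverse to each other only where the first one lands in the ball. -/
structure IsBiLipschitzGerm (X : Set E) (Y : Set E') (F : E → E') (G : E' → E) (K : ℝ≥0)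
    (r : ℝ) : Prop where
  radius_pos : 0 < r
  zero_mem : 0 ∈ X
  map_zero : F 0 = 0
  mapsTo : Set.MapsTo F (X ∩ ball 0 r) Y
  lipschitzOnWith : LipschitzOnWith K F (X ∩ ball 0 r)
  mapsTo_inv : Set.MapsTo G (Y ∩ ball 0 r) X
  lipschitzOnWith_inv : LipschitzOnWith K G (Y ∩ ball 0 r)
  leftInv : ∀ p ∈ X ∩ ball 0 r, F p ∈ ball 0 r → G (F p) = p
  rightInv : ∀ q ∈ Y ∩ ball 0 r, G q ∈ ball 0 r → F (G q) = q

namespace IsBiLipschitzGerm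

variable {X : Set E} {Y : Set E'} {F : E → E'} {G : E' → E} {K : ℝ≥0} {r : ℝ}

theorem zero_mem_inter_ball (h : IsBiLipschitzGerm X Y F G K r) : 0 ∈ X ∩ ball 0 r :=
  ⟨h.zero_mem, mem_ball_self h.radius_pos⟩

theorem symm (h : IsBiLipschitzGerm X Y F G K r) : IsBiLipschitzGerm Y X G F K r where
  radius_pos := h.radius_pos
  zero_mem := h.map_zero ▸ h.mapsTo h.zero_mem_inter_ball
  map_zero := by
    have h0 := h.zero_mem_inter_ball
    simpa only [h.map_zero] using h.leftInv 0 h0 (h.map_zero ▸ mem_ball_self h.radius_pos)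
  mapsTo := h.mapsTo_inv
  lipschitzOnWith := h.lipschitzOnWith_inv
  mapsTo_inv := h.mapsTo
  lipschitzOnWith_inv := h.lipschitzOnWith
  leftInv := h.rightInv
  rightInv := h.leftInv

theorem norm_sub_le_mul_norm_map_sub (h : IsBiLipschitzGerm X Y F G K r) {p q : E}
    (hp : p ∈ X ∩ ball 0 r) (hq : q ∈ X ∩ ball 0 r) (hFp : F p ∈ ball 0 r)
    (hFq : F q ∈ ball 0 r) : ‖p - q‖ ≤ K * ‖F p - F q‖ := by
  simpa only [h.leftInv p hp hFp, h.leftInv q hq hFq] using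
    h.lipschitzOnWith_inv.norm_sub_le ⟨h.mapsTo hp, hFp⟩ ⟨h.mapsTo hq, hFq⟩

theorem norm_le_mul_norm_map (h : IsBiLipschitzGerm X Y F G K r) {p : E}
    (hp : p ∈ X ∩ ball 0 r) (hFp : F p ∈ ball 0 r) : ‖p‖ ≤ K * ‖F p‖ := by
  have hF0 : F 0 ∈ ball 0 r := h.map_zero ▸ mem_ball_self h.radius_pos
  simpa only [h.map_zero, sub_zero] using
    h.norm_sub_le_mul_norm_map_sub hp h.zero_mem_inter_ball hFp hF0

theorem eventually_mem_ball (h : IsBiLipschitzGerm X Y F G K r) :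
    ∀ᶠ p in 𝓝[X] 0, p ∈ X ∩ ball 0 r :=
  inter_mem_nhdsWithin X (ball_mem_nhds 0 h.radius_pos)

theorem tendsto (h : IsBiLipschitzGerm X Y F G K r) : Tendsto F (𝓝[X] 0) (𝓝[Y] 0) := by
  refine tendsto_nhdsWithin_iff.2 ⟨?_, h.eventually_mem_ball.mono fun p hp => h.mapsTo hp⟩
  have hF : ContinuousWithinAt F X 0 :=
    (h.lipschitzOnWith.continuousOn 0 h.zero_mem_inter_ball).mono_of_mem_nhdsWithin
      h.eventually_mem_ball
  simpa only [h.map_zero] using hF.tendsto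

end IsBiLipschitzGerm

theorem BiHolderGerm.exists_isBiLipschitzGerm {X Y : Set (EuclideanSpace ℂ (Fin 2))}
    (h : BiHolderGerm X Y 1) (h0 : 0 ∈ X) :
    ∃ F G K r, IsBiLipschitzGerm X Y F G K r := by
  obtain ⟨U, V, F, c, hU, hV, h0U, h0V, hc, hF0, hbij, hF⟩ := h
  simp only [div_one, Real.rpow_one, one_div, inv_mul_le_iff₀ hc] at hF
  obtain ⟨r, hr, hrUV⟩ := Metric.isOpen_iff.1 (hU.inter hV) 0 ⟨h0U, h0V⟩
  have hXU : X ∩ ball 0 r ⊆ X ∩ U :=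
    Set.inter_subset_inter_right X (hrUV.trans Set.inter_subset_left)
  have hYV : Y ∩ ball 0 r ⊆ Y ∩ V :=
    Set.inter_subset_inter_right Y (hrUV.trans Set.inter_subset_right)
  have hinv := hbij.invOn_invFunOn
  have hmaps := hbij.surjOn.mapsTo_invFunOn
  refine ⟨F, Function.invFunOn F (X ∩ U), c.toNNReal, r, hr, h0, hF0,
    fun p hp => (hbij.mapsTo (hXU hp)).1, .of_dist_le' fun p hp q hq => ?_,
    fun p hp => (hmaps (hYV hp)).1, .of_dist_le' fun p hp q hq => ?_,
    fun p hp _ => hinv.1 (hXU hp), fun q hq _ => hinv.2 (hYV hq)⟩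
  · simpa only [dist_eq_norm] using (hF p (hXU hp) q (hXU hq)).2
  · simpa only [dist_eq_norm, hinv.2 (hYV hp), hinv.2 (hYV hq)] using
      (hF _ (hmaps (hYV hp)) _ (hmaps (hYV hq))).1

end BiLipschitzGerm

section Cusp

/-- The plane curve `y² = x^(2k+1)`, the `A_{2k}` singularity. -/
def cusp (k : ℕ) : Set (EuclideanSpace ℂ (Fin 2)) := {p | p 1 ^ 2 = p 0 ^ (2 * k + 1)}

/-- The parametrization `s ↦ (s², s^(2k+1))` of `cusp k`. -/
def cuspParam (k : ℕ) (s : ℂ) : EuclideanSpace ℂ (Fin 2) := !₂[s ^ 2, s ^ (2 * k + 1)]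

variable {k : ℕ}

@[simp]
theorem cuspParam_apply_zero (k : ℕ) (s : ℂ) : cuspParam k s 0 = s ^ 2 := rfl

@[simp]
theorem cuspParam_apply_one (k : ℕ) (s : ℂ) : cuspParam k s 1 = s ^ (2 * k + 1) := rfl

theorem cuspParam_mem_cusp (k : ℕ) (s : ℂ) : cuspParam k s ∈ cusp k := by
  change (s ^ (2 * k + 1)) ^ 2 = (s ^ 2) ^ (2 * k + 1)
  ring

theorem exists_cuspParam_eq {p : EuclideanSpace ℂ (Fin 2)} (hp : p ∈ cusp k) :
    ∃ s, cuspParam k s = p := by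
  have hp : p 1 ^ 2 = p 0 ^ (2 * k + 1) := hp
  suffices ∃ s : ℂ, s ^ 2 = p 0 ∧ s ^ (2 * k + 1) = p 1 by
    obtain ⟨s, h0, h1⟩ := this
    exact ⟨s, by ext i; fin_cases i <;> simpa⟩
  obtain ⟨s, hs⟩ := IsAlgClosed.exists_pow_nat_eq (p 0) two_pos
  have hsq : p 1 ^ 2 = (s ^ (2 * k + 1)) ^ 2 := by rw [hp, ← hs]; ring
  rcases sq_eq_sq_iff_eq_or_eq_neg.1 hsq with h | h
  · exact ⟨s, hs, h.symm⟩
  · exact ⟨-s, by rw [neg_sq, hs], by rw [Odd.neg_pow ⟨k, rfl⟩, h]⟩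

theorem contDiff_cuspParam (k : ℕ) : ContDiff ℝ 1 (cuspParam k) := by
  suffices ContDiff ℂ 1 (cuspParam k) from this.restrict_scalars ℝ
  refine contDiff_euclidean.2 fun i => ?_
  fin_cases i
  · exact contDiff_id.pow 2
  · exact contDiff_id.pow (2 * k + 1)

theorem tendsto_cuspParam_zero (k : ℕ) : Tendsto (cuspParam k) (𝓝 0) (𝓝[cusp k] 0) := by
  have h0 : cuspParam k 0 = 0 := by ext i; fin_cases i <;> simp
  exact tendsto_nhdsWithin_iff.2 ⟨h0 ▸ (contDiff_cuspParam k).continuous.tendsto 0,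
    .of_forall (cuspParam_mem_cusp k)⟩

theorem exists_lipschitzOnWith_cuspParam (k : ℕ) :
    ∃ L, LipschitzOnWith L (cuspParam k) (closedBall 0 1) :=
  (contDiff_cuspParam k).contDiffOn.exists_lipschitzOnWith one_ne_zero
    (convex_closedBall 0 1) (isCompact_closedBall 0 1)

theorem sq_norm_le_norm_cuspParam (k : ℕ) (s : ℂ) : ‖s‖ ^ 2 ≤ ‖cuspParam k s‖ := by
  simpa using PiLp.norm_apply_le (cuspParam k s) 0

theorem norm_le_norm_zero_add_norm_one (p : EuclideanSpace ℂ (Fin 2)) : ‖p‖ ≤ ‖p 0‖ + ‖p 1‖ := by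
  rw [EuclideanSpace.norm_eq, Fin.sum_univ_two]
  exact Real.sqrt_le_iff.2 ⟨by positivity, by nlinarith [norm_nonneg (p 0), norm_nonneg (p 1)]⟩

theorem norm_cuspParam_pow_le {s : ℂ} (hs : ‖s‖ ≤ 1) :
    ‖cuspParam k s‖ ^ k ≤ 2 ^ k * ‖s‖ ^ (2 * k) := by
  rw [pow_mul, ← mul_pow]
  rcases k.eq_zero_or_pos with rfl | hk
  · simp
  · have hpow : ‖s‖ ^ (2 * k + 1) ≤ ‖s‖ ^ 2 := pow_le_pow_of_le_one (norm_nonneg s) hs (by lia)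
    have hnorm := norm_le_norm_zero_add_norm_one (cuspParam k s)
    rw [cuspParam_apply_zero, cuspParam_apply_one, norm_pow, norm_pow] at hnorm
    gcongr
    linarith

theorem norm_cuspParam_sub_cuspParam_neg (k : ℕ) (s : ℂ) :
    ‖cuspParam k s - cuspParam k (-s)‖ = 2 * ‖s‖ ^ (2 * k + 1) := by
  have h0 : (cuspParam k s - cuspParam k (-s)) 0 = 0 := by simp
  have h1 : (cuspParam k s - cuspParam k (-s)) 1 = 2 * s ^ (2 * k + 1) := by
    rw [PiLp.sub_apply, cuspParam_apply_one, cuspParam_apply_one, Odd.neg_pow ⟨k, rfl⟩,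
      sub_neg_eq_add, two_mul (s ^ _)]
  rw [EuclideanSpace.norm_eq, Fin.sum_univ_two, h0, h1]
  simp

theorem exists_norm_pow_mul_norm_sub_le (k : ℕ) :
    ∃ C : ℝ, 0 ≤ C ∧ ∀ s ∈ closedBall (0 : ℂ) 1, ∀ s' ∈ closedBall (0 : ℂ) 1,
      ‖s‖ ^ (2 * k) * ‖s - s'‖ ≤ C * ‖cuspParam k s - cuspParam k s'‖ := by
  obtain ⟨L, hL⟩ := (contDiff_id.pow k : ContDiff ℝ 1 fun z : ℂ => z ^ k).contDiffOn
    |>.exists_lipschitzOnWith one_ne_zero (convex_closedBall 0 1) (isCompact_closedBall 0 1)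
  refine ⟨L + 1, by positivity, fun s hs s' hs' => ?_⟩
  set v := cuspParam k s - cuspParam k s'
  have hsq_mem : ∀ z ∈ closedBall (0 : ℂ) 1, z ^ 2 ∈ closedBall (0 : ℂ) 1 := fun z hz => by
    rw [mem_closedBall_zero_iff] at hz ⊢
    rw [norm_pow]
    exact pow_le_one₀ (norm_nonneg z) hz
  have heven : ‖(s ^ 2) ^ k - (s' ^ 2) ^ k‖ ≤ L * ‖v‖ :=
    (hL.norm_sub_le (hsq_mem s hs) (hsq_mem s' hs')).trans
      (mul_le_mul_of_nonneg_left (PiLp.norm_apply_le v 0) L.2)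
  have hodd : ‖s ^ (2 * k + 1) - s' ^ (2 * k + 1)‖ ≤ ‖v‖ := PiLp.norm_apply_le v 1
  rw [mem_closedBall_zero_iff] at hs'
  calc ‖s‖ ^ (2 * k) * ‖s - s'‖
      = ‖(s ^ (2 * k + 1) - s' ^ (2 * k + 1)) - s' * ((s ^ 2) ^ k - (s' ^ 2) ^ k)‖ := by
        rw [← norm_pow, ← norm_mul]; ring_nf
    _ ≤ ‖v‖ + 1 * (L * ‖v‖) := by
        refine (norm_sub_le _ _).trans (add_le_add hodd ?_)
        rw [norm_mul]
        gcongr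
    _ = (L + 1) * ‖v‖ := by ring

theorem re_ne_zero_of_norm_sq_sub_one_lt_one {z : ℂ} (hz : ‖z ^ 2 - 1‖ < 1) : z.re ≠ 0 := by
  intro hre
  have hlt := (neg_le_abs _).trans_lt ((Complex.abs_re_le_norm (z ^ 2 - 1)).trans_lt hz)
  rw [Complex.sub_re, sq, Complex.mul_re, hre, Complex.one_re] at hlt
  nlinarith [mul_self_nonneg z.im]

theorem div_pow_sq_eq_of_mem_cusp {p : EuclideanSpace ℂ (Fin 2)} (hp : p ∈ cusp k) (hp0 : p 0 ≠ 0) :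
    (p 1 / p 0 ^ k) ^ 2 = p 0 := by
  have hcurve : p 1 ^ 2 = p 0 ^ (2 * k + 1) := hp
  rw [div_pow, hcurve]
  field_simp
  ring

theorem cuspParam_one_div_zero_pow (k : ℕ) (s : ℂ) :
    cuspParam k s 1 / cuspParam k s 0 ^ k = s := by
  rcases eq_or_ne s 0 with rfl | hs
  · simp
  · rw [cuspParam_apply_zero, cuspParam_apply_one, ← pow_mul, pow_succ]
    field_simp

theorem cuspParam_neg_notMem_of_isPreconnected {S : Set (EuclideanSpace ℂ (Fin 2))} {s : ℂ}
    (hS : IsPreconnected S) (hScusp : S ⊆ cusp k) (hSball : S ⊆ ball (cuspParam k s) (‖s‖ ^ 2))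
    (hs : cuspParam k s ∈ S) : cuspParam k (-s) ∉ S := by
  intro hneg
  have hs0 : s ≠ 0 := by
    rintro rfl
    simpa using hSball hs
  have hdist : ∀ p ∈ S, ‖p 0 - s ^ 2‖ < ‖s‖ ^ 2 := fun p hp =>
    (PiLp.norm_apply_le (p - cuspParam k s) 0).trans_lt (mem_ball_iff_norm.1 (hSball hp))
  have hp0 : ∀ p ∈ S, p 0 ≠ 0 := fun p hp h => by simpa [h] using hdist p hp
  -- On the cusp `y / x ^ k` is a square root of `x`; divided by `s` its square is near `1`.
  let f : EuclideanSpace ℂ (Fin 2) → ℝ := fun p => (p 1 / p 0 ^ k / s).re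
  have hf : ContinuousOn f S := by
    refine Complex.continuous_re.comp_continuousOn (ContinuousOn.div_const ?_ s)
    exact ContinuousOn.div (by fun_prop) (by fun_prop) fun p hp => pow_ne_zero k (hp0 p hp)
  have hf_ne : ∀ p ∈ S, f p ≠ 0 := fun p hp => by
    have hsq : (p 1 / p 0 ^ k / s) ^ 2 - 1 = (p 0 - s ^ 2) / s ^ 2 := by
      rw [div_pow, div_pow_sq_eq_of_mem_cusp (hScusp hp) (hp0 p hp), sub_div,
        div_self (pow_ne_zero 2 hs0)]
    refine re_ne_zero_of_norm_sq_sub_one_lt_one ?_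
    rw [hsq, norm_div, norm_pow, div_lt_one (by positivity)]
    exact hdist p hp
  have hf_pos : f (cuspParam k s) = 1 := by
    simp only [f, cuspParam_one_div_zero_pow, div_self hs0, Complex.one_re]
  have hf_neg : f (cuspParam k (-s)) = -1 := by
    simp only [f, cuspParam_one_div_zero_pow, neg_div, div_self hs0, Complex.neg_re, Complex.one_re]
  obtain ⟨p, hp, hfp⟩ := hS.intermediate_value hneg hs hf
    (show (0 : ℝ) ∈ Set.Icc _ _ by rw [hf_neg, hf_pos]; norm_num)
  exact hf_ne p hp hfp

theorem sq_norm_le_of_lipschitzOnWith_of_convex {E : Type*} [NormedAddCommGroup E]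
    [NormedSpace ℝ E] {f : E → EuclideanSpace ℂ (Fin 2)} {D : Set E} {L : ℝ≥0} {a b : E} {t : ℂ}
    (hf : LipschitzOnWith L f D) (hD : Convex ℝ D) (hfD : Set.MapsTo f D (cusp k)) (ha : a ∈ D)
    (hb : b ∈ D) (hfa : f a = cuspParam k t) (hfb : f b = cuspParam k (-t)) :
    ‖t‖ ^ 2 ≤ L * ‖a - b‖ := by
  by_contra! hlt
  have hsegment : segment ℝ a b ⊆ D := hD.segment_subset ha hb
  refine cuspParam_neg_notMem_of_isPreconnected (S := f '' segment ℝ a b) (s := t)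
    ((convex_segment a b).isPreconnected.image f (hf.continuousOn.mono hsegment))
    (hfD.mono_left hsegment).image_subset ?_ ⟨a, left_mem_segment ℝ a b, hfa⟩
    ⟨b, right_mem_segment ℝ a b, hfb⟩
  rintro _ ⟨w, hw, rfl⟩
  rw [← hfa, mem_ball]
  calc dist (f w) (f a) ≤ L * dist w a := hf.dist_le_mul w (hsegment hw) a ha
    _ ≤ L * ‖a - b‖ := by
        gcongr
        exact dist_eq_norm a b ▸ segment_subset_closedBall_left a b hw
    _ < ‖t‖ ^ 2 := hlt

end Cusp

namespace IsBiLipschitzGerm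

variable {k l : ℕ} {X Y : Set (EuclideanSpace ℂ (Fin 2))}
  {F G : EuclideanSpace ℂ (Fin 2) → EuclideanSpace ℂ (Fin 2)} {K : ℝ≥0} {r : ℝ}

theorem eventually_cuspParam_mem_ball (h : IsBiLipschitzGerm (cusp l) Y F G K r) :
    ∀ᶠ t in 𝓝 (0 : ℂ), cuspParam l t ∈ cusp l ∩ ball 0 r ∧ F (cuspParam l t) ∈ ball 0 r := by
  have hF := (h.tendsto.comp (tendsto_cuspParam_zero l)).mono_right nhdsWithin_le_nhds
  exact ((tendsto_cuspParam_zero l).eventually h.eventually_mem_ball).and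
    (hF.eventually_mem (ball_mem_nhds 0 h.radius_pos))

theorem eventually_exists_cuspParam_eq (h : IsBiLipschitzGerm (cusp l) (cusp k) F G K r) {ε : ℝ}
    (hε : 0 < ε) :
    ∀ᶠ t in 𝓝 (0 : ℂ), ∃ s ∈ ball (0 : ℂ) ε, cuspParam k s = F (cuspParam l t) := by
  have hF := h.tendsto.comp (tendsto_cuspParam_zero l)
  filter_upwards [hF (inter_mem_nhdsWithin _ (ball_mem_nhds 0 (pow_pos hε 2)))] with t ht
  obtain ⟨s, hs⟩ := exists_cuspParam_eq ht.1
  refine ⟨s, mem_ball_zero_iff.2 (lt_of_pow_lt_pow_left₀ 2 hε.le ?_), hs⟩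
  exact (sq_norm_le_norm_cuspParam k s).trans_lt (hs ▸ mem_ball_zero_iff.1 ht.2)

theorem norm_pow_le_of_cuspParam_eq (h : IsBiLipschitzGerm (cusp l) (cusp k) F G K r)
    {s t : ℂ} (hs : ‖s‖ ≤ 1) (ht : cuspParam l t ∈ cusp l ∩ ball 0 r)
    (hFt : F (cuspParam l t) ∈ ball 0 r) (hst : cuspParam k s = F (cuspParam l t)) :
    ‖t‖ ^ (2 * k) ≤ (2 * K) ^ k * ‖s‖ ^ (2 * k) :=
  calc ‖t‖ ^ (2 * k) = (‖t‖ ^ 2) ^ k := pow_mul _ _ _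
    _ ≤ ‖cuspParam l t‖ ^ k := by gcongr; exact sq_norm_le_norm_cuspParam l t
    _ ≤ (K * ‖F (cuspParam l t)‖) ^ k := by gcongr; exact h.norm_le_mul_norm_map ht hFt
    _ = K ^ k * ‖cuspParam k s‖ ^ k := by rw [mul_pow, hst]
    _ ≤ K ^ k * (2 ^ k * ‖s‖ ^ (2 * k)) := by gcongr; exact norm_cuspParam_pow_le hs
    _ = (2 * K) ^ k * ‖s‖ ^ (2 * k) := by ring

theorem exists_eventually_norm_sub_le (h : IsBiLipschitzGerm (cusp l) (cusp k) F G K r)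
    (hkl : k < l) :
    ∃ C : ℝ, ∀ᶠ t in 𝓝[≠] (0 : ℂ), ∀ s ∈ closedBall (0 : ℂ) 1, ∀ s' ∈ closedBall (0 : ℂ) 1,
      cuspParam k s = F (cuspParam l t) → cuspParam k s' = F (cuspParam l (-t)) →
        ‖s - s'‖ ≤ C * ‖t‖ ^ 3 := by
  obtain ⟨C, hC0, hC⟩ := exists_norm_pow_mul_norm_sub_le k
  refine ⟨(2 * K) ^ k * (C * (K * 2)), ?_⟩
  have hev := h.eventually_cuspParam_mem_ball
  have hev_neg := (continuous_neg.tendsto' (0 : ℂ) 0 neg_zero).eventually hev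
  filter_upwards [nhdsWithin_le_nhds hev, nhdsWithin_le_nhds hev_neg,
    nhdsWithin_le_nhds (closedBall_mem_nhds 0 one_pos), self_mem_nhdsWithin]
    with t ⟨ht, hFt⟩ ⟨ht', _⟩ ht1 ht0 s hs s' hs' hst hst'
  rw [mem_closedBall_zero_iff] at ht1
  have hFF : ‖cuspParam k s - cuspParam k s'‖ ≤ K * (2 * ‖t‖ ^ (2 * l + 1)) := by
    rw [hst, hst', ← norm_cuspParam_sub_cuspParam_neg]
    exact h.lipschitzOnWith.norm_sub_le ht ht'
  have ht_pos : 0 < ‖t‖ ^ (2 * k) := pow_pos (norm_pos_iff.2 ht0) _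
  refine le_of_mul_le_mul_left ?_ ht_pos
  calc ‖t‖ ^ (2 * k) * ‖s - s'‖
      ≤ (2 * K) ^ k * ‖s‖ ^ (2 * k) * ‖s - s'‖ := by
        gcongr
        exact h.norm_pow_le_of_cuspParam_eq (mem_closedBall_zero_iff.1 hs) ht hFt hst
    _ = (2 * K) ^ k * (‖s‖ ^ (2 * k) * ‖s - s'‖) := mul_assoc _ _ _
    _ ≤ (2 * K) ^ k * (C * ‖cuspParam k s - cuspParam k s'‖) := by
        gcongr _ * ?_
        exact hC s hs s' hs'
    _ ≤ (2 * K) ^ k * (C * (K * (2 * ‖t‖ ^ (2 * l + 1)))) := by gcongr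
    _ ≤ (2 * K) ^ k * (C * (K * (2 * ‖t‖ ^ (2 * k + 3)))) := by
        gcongr _ * (_ * (_ * (_ * ?_)))
        exact pow_le_pow_of_le_one (norm_nonneg t) ht1 (by lia)
    _ = ‖t‖ ^ (2 * k) * ((2 * K) ^ k * (C * (K * 2)) * ‖t‖ ^ 3) := by ring

theorem exists_lipschitzOnWith_comp_cuspParam (h : IsBiLipschitzGerm X (cusp k) F G K r) :
    ∃ ε ∈ Set.Ioc (0 : ℝ) 1, ∃ L, LipschitzOnWith L (G ∘ cuspParam k) (ball 0 ε) ∧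
      Set.MapsTo (G ∘ cuspParam k) (ball 0 ε) X := by
  obtain ⟨L, hL⟩ := exists_lipschitzOnWith_cuspParam k
  obtain ⟨δ, hδ, hball⟩ := Metric.eventually_nhds_iff_ball.1
    ((tendsto_cuspParam_zero k).eventually h.symm.eventually_mem_ball)
  have hmaps : Set.MapsTo (cuspParam k) (ball 0 (min δ 1)) (cusp k ∩ ball 0 r) :=
    fun s hs => hball s (ball_subset_ball (min_le_left δ 1) hs)
  have hsub : ball (0 : ℂ) (min δ 1) ⊆ closedBall 0 1 :=
    (ball_subset_ball (min_le_right δ 1)).trans ball_subset_closedBall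
  exact ⟨min δ 1, ⟨lt_min hδ one_pos, min_le_right δ 1⟩, K * L,
    h.lipschitzOnWith_inv.comp (hL.mono hsub) hmaps, h.mapsTo_inv.comp hmaps⟩

theorem index_le (h : IsBiLipschitzGerm (cusp l) (cusp k) F G K r) : l ≤ k := by
  by_contra! hkl
  obtain ⟨ε, ⟨hε, hε1⟩, L, hL, hmaps⟩ := h.exists_lipschitzOnWith_comp_cuspParam
  obtain ⟨C, hC⟩ := h.exists_eventually_norm_sub_le hkl
  have hneg : Tendsto Neg.neg (𝓝 (0 : ℂ)) (𝓝 0) := continuous_neg.tendsto' 0 0 neg_zero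
  have hmem := h.eventually_cuspParam_mem_ball
  have hparam := h.eventually_exists_cuspParam_eq hε
  have hsmall : ∀ᶠ t in 𝓝 (0 : ℂ), L * C * ‖t‖ < 1 :=
    (by fun_prop : Continuous fun t : ℂ => L * C * ‖t‖).tendsto' 0 0 (by simp)
      |>.eventually_lt_const one_pos
  obtain ⟨t, hCt, ht0, ⟨ht, hFt⟩, ⟨ht', hFt'⟩, ⟨s, hs, hst⟩, ⟨s', hs', hst'⟩, hLCt⟩ :=
    (hC.and <| eventually_mem_nhdsWithin.and <| nhdsWithin_le_nhds <|
      hmem.and <| (hneg.eventually hmem).and <| hparam.and <| (hneg.eventually hparam).and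
        hsmall).exists
  have hsub : ball (0 : ℂ) ε ⊆ closedBall 0 1 := (ball_subset_ball hε1).trans ball_subset_closedBall
  have hGs : (G ∘ cuspParam k) s = cuspParam l t := by
    rw [Function.comp_apply, hst, h.leftInv _ ht hFt]
  have hGs' : (G ∘ cuspParam k) s' = cuspParam l (-t) := by
    rw [Function.comp_apply, hst', h.leftInv _ ht' hFt']
  have ht_pos : 0 < ‖t‖ ^ 2 := pow_pos (norm_pos_iff.2 ht0) 2
  refine lt_irrefl (‖t‖ ^ 2) ?_
  calc ‖t‖ ^ 2 ≤ L * ‖s - s'‖ :=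
        sq_norm_le_of_lipschitzOnWith_of_convex hL (convex_ball 0 ε) hmaps hs hs' hGs hGs'
    _ ≤ L * (C * ‖t‖ ^ 3) := by gcongr; exact hCt s (hsub hs) s' (hsub hs') hst hst'
    _ = L * C * ‖t‖ * ‖t‖ ^ 2 := by ring
    _ < 1 * ‖t‖ ^ 2 := mul_lt_mul_of_pos_right hLCt ht_pos
    _ = ‖t‖ ^ 2 := one_mul _

end IsBiLipschitzGerm

theorem not_biLipschitz_general {k l : ℕ} (hkl : k ≠ l) : ¬ BiHolderGerm (cusp k) (cusp l) 1 := by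
  intro h
  obtain ⟨F, G, K, r, hFG⟩ := h.exists_isBiLipschitzGerm (by simp [cusp])
  exact hkl (hFG.index_le.antisymm hFG.symm.index_le)

/-- The germs at `0` of `y² = x⁵` and `y² = x³` are not bi-Lipschitz homeomorphic. -/
theorem not_biLipschitz : ¬ BiHolderGerm curveC curveCt 1 :=
  not_biLipschitz_general (k := 2) (l := 1) (by decide)
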